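/- arXiv:2206.11402 — 4 statements merged into one kernel-verified Lean document; each statement's English description precedes it below -/
import Mathlib

section
/- In the symmetric case, for every n ≥ 1, every z ∈ {0,1}^n, and every i ∈ {1,…,n}, Pr[Z = z | X_i = 0] / Pr[Z = z | X_i = 1] ≤ ((1−ρ)/ρ)·(a/c)², where a = √(θ² + (1−2θ)(1−2ρ)²) + (1−θ)(1−2ρ) and c = 2θ(1−ρ). -/
/-!
Since the model is invariant under flipping all bits, `Pr[X_i = 0] = Pr[X_i = 1]`, so the quotient
of likelihoods is the quotient of the joint probabilities `Pr[Z = z, X_i = v]`. Each of these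
factors as (past of `i`) · `B(v, z_i)` · (future of `i`). The emission factor contributes at most
`(1-ρ)/ρ`. The quotients `p/q` of the past and of the future each arise from the value `1` by
iterating maps `p/q ↦ ((1-θ) e₀ p + θ e₁ q) / (θ e₀ p + (1-θ) e₁ q)` with `(e₀, e₁)` equal to
`(1-ρ, ρ)` or `(ρ, 1-ρ)`. The larger of these maps is increasing with positive fixed point
`r = a/c ≥ 1`, so both quotients stay at most `r` (`step_le`).

The induction on the length removes the first letter of the chain, absorbing it into the initial
weight: this is why path weights are set up with an arbitrary initial weight `g`.
-/

open Finset
open scoped Classical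

noncomputable section

/-- Transition matrix of the binary Markov chain: `P(0,0)=1-q, P(0,1)=q, P(1,0)=r, P(1,1)=1-r`. -/
def mcT (q r : ℝ) : Bool → Bool → ℝ
  | false, false => 1 - q
  | false, true => q
  | true, false => r
  | true, true => 1 - r

/-- Emission (noise) matrix: `B(0,0)=1-e0, B(0,1)=e0, B(1,0)=e1, B(1,1)=1-e1`. -/
def mcE (e0 e1 : ℝ) : Bool → Bool → ℝ
  | false, false => 1 - e0
  | false, true => e0
  | true, false => e1
  | true, true => 1 - e1

/-- Stationary initial distribution `π = (r/(q+r), q/(q+r))`. -/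
def mcInit (q r : ℝ) : Bool → ℝ
  | false => r / (q + r)
  | true => q / (q + r)

/-- `Pr[X = x] = π(x_1) ∏_{t=1}^{n-1} P(x_t, x_{t+1})` for the hidden chain. -/
def priorX (q r : ℝ) (n : ℕ) (x : Fin n → Bool) : ℝ :=
  (if h : 0 < n then mcInit q r (x ⟨0, h⟩) else 1) *
  ∏ t : Fin (n - 1),
    mcT q r (x ⟨t.1, by have := t.isLt; omega⟩) (x ⟨t.1 + 1, by have := t.isLt; omega⟩)

/-- Probability of a joint event `E` on the hidden sequence `X` and observed sequence `Z`,
under the joint law `Pr[X = x, Z = z] = priorX x · ∏_t B(x_t, z_t)`. -/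
def eventPr (q r e0 e1 : ℝ) (n : ℕ)
    (E : (Fin n → Bool) → (Fin n → Bool) → Prop) : ℝ :=
  ∑ x : Fin n → Bool, ∑ z : Fin n → Bool,
    if E x z then priorX q r n x * ∏ t, mcE e0 e1 (x t) (z t) else 0

/-- Conditional probability `Pr[E | F]` under the joint HMM law. -/
def condPr (q r e0 e1 : ℝ) (n : ℕ)
    (E F : (Fin n → Bool) → (Fin n → Bool) → Prop) : ℝ :=
  eventPr q r e0 e1 n (fun x z => E x z ∧ F x z) / eventPr q r e0 e1 n F

/-- `Pr[Z = z | X_i = v]`. -/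
def likGivenXi (q r e0 e1 : ℝ) (n : ℕ) (i : Fin n) (v : Bool) (z : Fin n → Bool) : ℝ :=
  condPr q r e0 e1 n (fun _ z' => z' = z) (fun x _ => x i = v)

/-- Forward quantities: `α_0(x) = 1`,
`α_{t+1}(x) = B(x, z_{t+1}) (α_t(0) P(x,0) + α_t(1) P(x,1))` (1-based `z` index `t+1`
is the 0-based index `t`). -/
def fwd (q r e0 e1 : ℝ) (n : ℕ) (z : Fin n → Bool) : ℕ → Bool → ℝ
  | 0, _ => 1
  | t + 1, x =>
    if h : t < n then
      mcE e0 e1 x (z ⟨t, h⟩) *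
        (fwd q r e0 e1 n z t false * mcT q r x false +
         fwd q r e0 e1 n z t true * mcT q r x true)
    else 1

/-- Backward quantities: `β_n(x) = 1`,
`β_t(x) = β_{t+1}(0) B(0, z_{t+1}) P(x,0) + β_{t+1}(1) B(1, z_{t+1}) P(x,1)`. -/
def bwd (q r e0 e1 : ℝ) (n : ℕ) (z : Fin n → Bool) (t : ℕ) (x : Bool) : ℝ :=
  if h : t < n then
    bwd q r e0 e1 n z (t + 1) false * mcE e0 e1 false (z ⟨t, h⟩) * mcT q r x false +
    bwd q r e0 e1 n z (t + 1) true * mcE e0 e1 true (z ⟨t, h⟩) * mcT q r x true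
  else 1
  termination_by n - t

/-- Joint weight of a hidden path `x` of length `n + 1` and observations `z`, with the initial
distribution replaced by an arbitrary weight `g`. -/
def pathW (θ ρ : ℝ) (n : ℕ) (g : Bool → ℝ) (z x : Fin (n + 1) → Bool) : ℝ :=
  g (x 0) * (∏ t : Fin n, mcT θ θ (x t.castSucc) (x t.succ)) * ∏ t, mcE ρ ρ (x t) (z t)

/-- Total weight of all hidden paths. For `g = P(u, ·)` this is the backward quantity `β(u)`. -/
def totW (θ ρ : ℝ) (n : ℕ) (g : Bool → ℝ) (z : Fin (n + 1) → Bool) : ℝ :=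
  ∑ x : Fin (n + 1) → Bool, pathW θ ρ n g z x

/-- Weight of all hidden paths passing through `v` at position `i`. -/
def atW (θ ρ : ℝ) (n : ℕ) (g : Bool → ℝ) (z : Fin (n + 1) → Bool) (i : Fin (n + 1)) (v : Bool) :
    ℝ :=
  ∑ x : Fin (n + 1) → Bool, if x i = v then pathW θ ρ n g z x else 0

lemma sum_cons (n : ℕ) (f : (Fin (n + 1) → Bool) → ℝ) :
    ∑ x, f x = ∑ u : Bool, ∑ x : Fin n → Bool, f (Fin.cons u x) := by
  rw [← Fintype.sum_prod_type']
  exact (Fintype.sum_equiv (Fin.consEquiv (fun _ => Bool)) _ _ (fun _ => rfl)).symm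

lemma pathW_cons (θ ρ : ℝ) (n : ℕ) (g : Bool → ℝ) (z : Fin (n + 2) → Bool) (u : Bool)
    (x : Fin (n + 1) → Bool) :
    pathW θ ρ (n + 1) g z (Fin.cons u x) =
      g u * mcE ρ ρ u (z 0) * pathW θ ρ n (mcT θ θ u) (Fin.tail z) x := by
  unfold pathW
  rw [Fin.prod_univ_succ, Fin.prod_univ_succ (n := n + 1)]
  simp only [Fin.cons_zero, Fin.cons_succ, Fin.castSucc_zero, ← Fin.succ_castSucc, Fin.tail]
  ring

lemma totW_succ (θ ρ : ℝ) (n : ℕ) (g : Bool → ℝ) (z : Fin (n + 2) → Bool) :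
    totW θ ρ (n + 1) g z =
      ∑ u, g u * mcE ρ ρ u (z 0) * totW θ ρ n (mcT θ θ u) (Fin.tail z) := by
  simp only [totW, sum_cons (n + 1), pathW_cons, Finset.mul_sum]

lemma totW_zero (θ ρ : ℝ) (g : Bool → ℝ) (z : Fin 1 → Bool) :
    totW θ ρ 0 g z = ∑ u, g u * mcE ρ ρ u (z 0) := by
  simp [totW, sum_cons 0, pathW]

lemma atW_zero (θ ρ : ℝ) (g : Bool → ℝ) (z : Fin 1 → Bool) (v : Bool) :
    atW θ ρ 0 g z 0 v = g v * mcE ρ ρ v (z 0) := by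
  cases v <;> simp [atW, sum_cons 0, pathW]

lemma atW_first (θ ρ : ℝ) (n : ℕ) (g : Bool → ℝ) (z : Fin (n + 2) → Bool) (v : Bool) :
    atW θ ρ (n + 1) g z 0 v =
      g v * mcE ρ ρ v (z 0) * totW θ ρ n (mcT θ θ v) (Fin.tail z) := by
  cases v <;> simp [atW, sum_cons (n + 1), pathW_cons, totW, Finset.mul_sum]

/-- The first letter can be summed out, at the price of advancing the initial weight by one step of
the forward recursion. -/
lemma atW_succ (θ ρ : ℝ) (n : ℕ) (g : Bool → ℝ) (z : Fin (n + 2) → Bool) (j : Fin (n + 1))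
    (v : Bool) :
    atW θ ρ (n + 1) g z j.succ v =
      atW θ ρ n (fun w => ∑ u, g u * mcE ρ ρ u (z 0) * mcT θ θ u w) (Fin.tail z) j v := by
  simp only [atW, sum_cons (n + 1) (fun x => if x j.succ = v then _ else _), pathW_cons,
    Fin.cons_succ]
  rw [Finset.sum_comm]
  refine Finset.sum_congr rfl fun x _ => ?_
  split_ifs with h
  · simp only [pathW, Fintype.sum_bool]
    ring
  · simp

section Bounds

variable {θ ρ r : ℝ}

lemma mcT_nonneg (hθ0 : 0 < θ) (hθ1 : θ < 1/2) (u v : Bool) : 0 ≤ mcT θ θ u v := by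
  cases u <;> cases v <;> simp only [mcT] <;> linarith

lemma mcE_nonneg (hρ0 : 0 < ρ) (hρ1 : ρ < 1/2) (u v : Bool) : 0 ≤ mcE ρ ρ u v := by
  cases u <;> cases v <;> simp only [mcE] <;> linarith

lemma pathW_nonneg (hθ0 : 0 < θ) (hθ1 : θ < 1/2) (hρ0 : 0 < ρ) (hρ1 : ρ < 1/2) (n : ℕ)
    (g : Bool → ℝ) (hg : ∀ u, 0 ≤ g u) (z x : Fin (n + 1) → Bool) : 0 ≤ pathW θ ρ n g z x :=
  mul_nonneg (mul_nonneg (hg _) (Finset.prod_nonneg fun _ _ => mcT_nonneg hθ0 hθ1 _ _))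
    (Finset.prod_nonneg fun _ _ => mcE_nonneg hρ0 hρ1 _ _)

lemma totW_nonneg (hθ0 : 0 < θ) (hθ1 : θ < 1/2) (hρ0 : 0 < ρ) (hρ1 : ρ < 1/2) (n : ℕ)
    (g : Bool → ℝ) (hg : ∀ u, 0 ≤ g u) (z : Fin (n + 1) → Bool) : 0 ≤ totW θ ρ n g z :=
  Finset.sum_nonneg fun _ _ => pathW_nonneg hθ0 hθ1 hρ0 hρ1 n g hg _ _

lemma atW_nonneg (hθ0 : 0 < θ) (hθ1 : θ < 1/2) (hρ0 : 0 < ρ) (hρ1 : ρ < 1/2) (n : ℕ)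
    (g : Bool → ℝ) (hg : ∀ u, 0 ≤ g u) (z : Fin (n + 1) → Bool) (i : Fin (n + 1)) (v : Bool) :
    0 ≤ atW θ ρ n g z i v :=
  Finset.sum_nonneg fun _ _ => by
    split_ifs
    · exact pathW_nonneg hθ0 hθ1 hρ0 hρ1 n g hg _ _
    · exact le_rfl

/-- One step of the recursion preserves the bound `p ≤ r q`, where `hfix` says that `r` is a fixed
point of the ratio map for the observation `0`. -/
lemma step_le (hθ0 : 0 < θ) (hθ1 : θ < 1/2) (hρ0 : 0 < ρ) (hρ1 : ρ < 1/2) (hr : 1 ≤ r)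
    (hfix : (1-ρ) * r * (1-θ-r*θ) = ρ * (r*(1-θ)-θ)) (b : Bool) {p q : ℝ} (hq : 0 ≤ q)
    (hpq : p ≤ r * q) :
    (1-θ) * mcE ρ ρ false b * p + θ * mcE ρ ρ true b * q ≤
      r * (θ * mcE ρ ρ false b * p + (1-θ) * mcE ρ ρ true b * q) := by
  have h1 : 0 ≤ r*(1-θ)-θ := by nlinarith
  have h2 : 0 ≤ 1-θ-r*θ := by
    have h3 : 0 ≤ ((1-ρ) * r) * (1-θ-r*θ) := hfix ▸ mul_nonneg hρ0.le h1
    exact nonneg_of_mul_nonneg_right h3 (by nlinarith)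
  have h4 : p * (1-θ-r*θ) ≤ r * q * (1-θ-r*θ) := mul_le_mul_of_nonneg_right hpq h2
  cases b <;> simp only [mcE]
  · have h5 := mul_le_mul_of_nonneg_left h4 (by linarith : 0 ≤ 1-ρ)
    have h6 : (1-ρ) * (r * q * (1-θ-r*θ)) = q * (ρ * (r*(1-θ)-θ)) := by rw [← hfix]; ring
    linarith
  · have h5 := mul_le_mul_of_nonneg_left h4 hρ0.le
    -- `ρ r (1-θ-rθ) ≤ (1-ρ) r (1-θ-rθ) = ρ (r(1-θ)-θ) ≤ (1-ρ) (r(1-θ)-θ)`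
    have h6 : 0 ≤ q * ((1-2*ρ) * (r * (1-θ-r*θ))) :=
      mul_nonneg hq (mul_nonneg (by linarith) (mul_nonneg (by linarith) h2))
    have h7 : 0 ≤ q * ((1-2*ρ) * (r*(1-θ)-θ)) :=
      mul_nonneg hq (mul_nonneg (by linarith) h1)
    have h8 : q * ((1-ρ) * r * (1-θ-r*θ)) = q * (ρ * (r*(1-θ)-θ)) := by rw [hfix]
    linarith

/-- The future of a position contributes a ratio of at most `r`. -/
lemma totW_le (hθ0 : 0 < θ) (hθ1 : θ < 1/2) (hρ0 : 0 < ρ) (hρ1 : ρ < 1/2) (hr : 1 ≤ r)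
    (hfix : (1-ρ) * r * (1-θ-r*θ) = ρ * (r*(1-θ)-θ)) (n : ℕ) (z : Fin (n + 1) → Bool) :
    totW θ ρ n (mcT θ θ false) z ≤ r * totW θ ρ n (mcT θ θ true) z := by
  induction n with
  | zero =>
    have h := step_le hθ0 hθ1 hρ0 hρ1 hr hfix (z 0) (p := 1) (q := 1) zero_le_one (by linarith)
    simp only [totW_zero, Fintype.sum_bool, mcT]
    linarith
  | succ n ih =>
    have h := step_le hθ0 hθ1 hρ0 hρ1 hr hfix (z 0)
      (totW_nonneg hθ0 hθ1 hρ0 hρ1 n _ (mcT_nonneg hθ0 hθ1 true) (Fin.tail z)) (ih (Fin.tail z))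
    simp only [totW_succ, Fintype.sum_bool]
    simp only [mcT] at h ⊢
    linarith

lemma mcE_le (hρ0 : 0 < ρ) (hρ1 : ρ < 1/2) (b : Bool) :
    mcE ρ ρ false b ≤ (1-ρ)/ρ * mcE ρ ρ true b := by
  cases b <;> simp only [mcE]
  · exact (div_mul_cancel₀ _ hρ0.ne').ge
  · have h : 1 ≤ (1-ρ)/ρ := by rw [le_div_iff₀ hρ0]; linarith
    nlinarith

/-- The joint bound, for any initial weight whose ratio is already at most `r`. -/
lemma atW_le (hθ0 : 0 < θ) (hθ1 : θ < 1/2) (hρ0 : 0 < ρ) (hρ1 : ρ < 1/2) (hr : 1 ≤ r)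
    (hfix : (1-ρ) * r * (1-θ-r*θ) = ρ * (r*(1-θ)-θ)) (n : ℕ) (g : Bool → ℝ) (hg : ∀ u, 0 ≤ g u)
    (hgr : g false ≤ r * g true) (z : Fin (n + 1) → Bool) (i : Fin (n + 1)) :
    atW θ ρ n g z i false ≤ (1-ρ)/ρ * r^2 * atW θ ρ n g z i true := by
  have hE := mcE_nonneg hρ0 hρ1
  have hT := mcT_nonneg hθ0 hθ1
  have hr0 : 0 ≤ r := by linarith
  -- the contribution of the past of the position together with its own emission
  have hgE : ∀ h : Bool → ℝ, (∀ u, 0 ≤ h u) → h false ≤ r * h true → ∀ b,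
      h false * mcE ρ ρ false b ≤ (r * h true) * ((1-ρ)/ρ * mcE ρ ρ true b) :=
    fun h hh hhr b => mul_le_mul hhr (mcE_le hρ0 hρ1 b) (hE _ _) (mul_nonneg hr0 (hh _))
  have hgE0 : ∀ h : Bool → ℝ, (∀ u, 0 ≤ h u) → h false ≤ r * h true → ∀ b,
      0 ≤ (r * h true) * ((1-ρ)/ρ * mcE ρ ρ true b) :=
    fun h hh hhr b => (mul_nonneg (hh _) (hE _ _)).trans (hgE h hh hhr b)
  induction n generalizing g with
  | zero =>
    obtain rfl : i = 0 := Fin.fin_one_eq_zero i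
    rw [atW_zero, atW_zero]
    have := mul_le_mul_of_nonneg_right hr (hgE0 g hg hgr (z 0))
    linarith [hgE g hg hgr (z 0)]
  | succ n ih =>
    refine Fin.cases ?_ (fun j => ?_) i
    · rw [atW_first, atW_first]
      refine (mul_le_mul (hgE g hg hgr (z 0)) (totW_le hθ0 hθ1 hρ0 hρ1 hr hfix n _)
        (totW_nonneg hθ0 hθ1 hρ0 hρ1 n _ (hT _) _) (hgE0 g hg hgr _)).trans_eq ?_
      ring
    · rw [atW_succ, atW_succ]
      have hg' : ∀ w, 0 ≤ ∑ u, g u * mcE ρ ρ u (z 0) * mcT θ θ u w := fun w =>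
        Finset.sum_nonneg fun u _ => mul_nonneg (mul_nonneg (hg _) (hE _ _)) (hT _ _)
      have hgr' : ∑ u, g u * mcE ρ ρ u (z 0) * mcT θ θ u false ≤
          r * ∑ u, g u * mcE ρ ρ u (z 0) * mcT θ θ u true := by
        have h := step_le hθ0 hθ1 hρ0 hρ1 hr hfix (z 0) (hg true) hgr
        simp only [Fintype.sum_bool, mcT]
        linarith
      exact ih _ hg' hgr' _ _

end Bounds

/-- The prior probability of `X_i = v` does not depend on `v`, by flipping all bits of `x`
and `z`. -/
lemma eventPr_symm (θ ρ : ℝ) (n : ℕ) (i : Fin n) :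
    eventPr θ θ ρ ρ n (fun x _ => x i = false) = eventPr θ θ ρ ρ n (fun x _ => x i = true) := by
  have hI : ∀ u, mcInit θ θ (!u) = mcInit θ θ u := by intro u; cases u <;> rfl
  have hT : ∀ u v, mcT θ θ (!u) (!v) = mcT θ θ u v := by
    intro u v; cases u <;> cases v <;> rfl
  have hE : ∀ u v, mcE ρ ρ (!u) (!v) = mcE ρ ρ u v := by
    intro u v; cases u <;> cases v <;> rfl
  let e : (Fin n → Bool) ≃ (Fin n → Bool) := Equiv.arrowCongr (Equiv.refl _) Equiv.boolNot
  have he : ∀ x t, e x t = !(x t) := fun _ _ => rfl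
  unfold eventPr
  refine Fintype.sum_equiv e _ _ fun x => Fintype.sum_equiv e _ _ fun z => ?_
  simp only [priorX, he, hI, hT, hE, Bool.not_eq_true']
  split_ifs <;> rfl

lemma eventPr_joint (θ ρ : ℝ) (n : ℕ) (i : Fin (n + 1)) (z : Fin (n + 1) → Bool) (v : Bool) :
    eventPr θ θ ρ ρ (n + 1) (fun x z' => z' = z ∧ x i = v) =
      atW θ ρ n (mcInit θ θ) z i v := by
  unfold eventPr atW
  refine Finset.sum_congr rfl fun x _ => ?_
  rw [Finset.sum_eq_single z]
  · simp only [true_and, pathW, priorX, Nat.succ_pos, dite_true]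
    rfl
  · intro b _ hb
    simp [hb]
  · simp

/-- Symmetric case: `Pr[Z = z | X_i = 0] / Pr[Z = z | X_i = 1] ≤ ((1-ρ)/ρ)·(a/c)²`. -/
theorem stmt1 (θ ρ : ℝ) (hθ0 : 0 < θ) (hθ1 : θ < 1/2) (hρ0 : 0 < ρ) (hρ1 : ρ < 1/2)
    (n : ℕ) (hn : 1 ≤ n) (z : Fin n → Bool) (i : Fin n)
    (a c : ℝ)
    (ha : a = Real.sqrt (θ^2 + (1-2*θ)*(1-2*ρ)^2) + (1-θ)*(1-2*ρ))
    (hc : c = 2*θ*(1-ρ)) :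
    likGivenXi θ θ ρ ρ n i false z / likGivenXi θ θ ρ ρ n i true z
      ≤ (1-ρ)/ρ * (a/c)^2 := by
  obtain ⟨n, rfl⟩ : ∃ m, n = m + 1 := ⟨n - 1, by omega⟩
  have hc0 : 0 < c := by rw [hc]; exact mul_pos (by linarith) (by linarith)
  set s := Real.sqrt (θ^2 + (1-2*θ)*(1-2*ρ)^2) with hs
  have hrad : 0 ≤ θ^2 + (1-2*θ)*(1-2*ρ)^2 :=
    add_nonneg (sq_nonneg _) (mul_nonneg (by linarith) (sq_nonneg _))
  have hss : s^2 = θ^2 + (1-2*θ)*(1-2*ρ)^2 := Real.sq_sqrt hrad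
  have hsθ : θ ≤ s := Real.le_sqrt_of_sq_le
    (le_add_of_nonneg_right (mul_nonneg (by linarith) (sq_nonneg _)))
  have hr : 1 ≤ a / c := by
    rw [le_div_iff₀ hc0, ha, hc]
    nlinarith
  have hfix : (1-ρ) * (a/c) * (1-θ-a/c*θ) = ρ * (a/c*(1-θ)-θ) := by
    have hquad : (1-ρ)*θ*a^2 - (1-θ)*(1-2*ρ)*a*c - ρ*θ*c^2 = 0 := by
      rw [ha, hc]
      linear_combination (1-ρ)*θ*hss
    field_simp
    linear_combination -hquad
  have hI : ∀ u, 0 ≤ mcInit θ θ u := by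
    intro u
    cases u <;> exact div_nonneg hθ0.le (by linarith)
  have hI' : mcInit θ θ false ≤ a / c * mcInit θ θ true :=
    le_mul_of_one_le_left (hI true) hr
  have hmain := atW_le hθ0 hθ1 hρ0 hρ1 hr hfix n (mcInit θ θ) hI hI' z i
  have hK : 0 ≤ (1-ρ)/ρ * (a/c)^2 :=
    mul_nonneg (div_nonneg (by linarith) hρ0.le) (sq_nonneg _)
  unfold likGivenXi condPr
  rw [eventPr_joint, eventPr_joint, eventPr_symm]
  by_cases hD : eventPr θ θ ρ ρ (n + 1) (fun x _ => x i = true) = 0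
  · simpa [hD] using hK
  · rw [div_div_div_cancel_right₀ hD]
    exact div_le_of_le_mul₀ (atW_nonneg hθ0 hθ1 hρ0 hρ1 n _ hI z i true) hK hmain

end
end

section
/- For every index i ∈ {1,…,n}, the likelihood ratio is maximized by the all-zero observed sequence: for all z ∈ {0,1}^n, Pr[Z = z | X_i = 0] / Pr[Z = z | X_i = 1] ≤ Pr[Z = 0^n | X_i = 0] / Pr[Z = 0^n | X_i = 1], where 0^n denotes the all-zero sequence. -/
/-!
Writing `A_z(v) = Pr[Z = z, X_i = v]`, the claim is the cross-multiplied inequality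
`A_z(0) · A_0(1) ≤ A_0(0) · A_z(1)`: the factors `Pr[X_i = v]` are common to both sides.
This is an instance of the Ahlswede–Daykin four functions theorem on the lattice
`Fin n → Bool`. Its pointwise hypothesis factorises over the coordinates, where it reduces to
`q r ≤ (1 - q)(1 - r)` for the transitions (`mcT_mul_le`) and
`e0 e1 ≤ (1 - e0)(1 - e1)` for the emissions (`mcE_mul_le`).
-/

open Finset
open scoped Classical

noncomputable section

/-- The joint weight `Pr[X = x, Z = z]`, set to zero unless `x_i = v`. -/
def jointAt (q r e0 e1 : ℝ) (n : ℕ) (i : Fin n) (v : Bool) (z x : Fin n → Bool) : ℝ :=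
  if x i = v then priorX q r n x * ∏ t, mcE e0 e1 (x t) (z t) else 0

lemma eventPr_eq_sum_jointAt (q r e0 e1 : ℝ) (n : ℕ) (i : Fin n) (v : Bool) (z : Fin n → Bool) :
    eventPr q r e0 e1 n (fun x z' => z' = z ∧ x i = v) =
      ∑ x, jointAt q r e0 e1 n i v z x := by
  unfold eventPr jointAt
  refine Finset.sum_congr rfl fun x _ => ?_
  rw [Finset.sum_eq_single z]
  · simp
  · intro b _ hb
    simp [hb]
  · simp

lemma mcT_pos {q r : ℝ} (hq0 : 0 < q) (hq1 : q < 1/2) (hr0 : 0 < r) (hr1 : r < 1/2)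
    (a b : Bool) : 0 < mcT q r a b := by
  cases a <;> cases b <;> simp only [mcT] <;> linarith

lemma mcE_pos {e0 e1 : ℝ} (he00 : 0 < e0) (he01 : e0 < 1/2) (he10 : 0 < e1) (he11 : e1 < 1/2)
    (a b : Bool) : 0 < mcE e0 e1 a b := by
  cases a <;> cases b <;> simp only [mcE] <;> linarith

lemma mcInit_pos {q r : ℝ} (hq0 : 0 < q) (hr0 : 0 < r) (a : Bool) : 0 < mcInit q r a := by
  cases a <;> simp only [mcInit] <;> positivity

lemma mcInit_mul_le (q r : ℝ) (a b : Bool) :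
    mcInit q r a * mcInit q r b ≤ mcInit q r (a ⊓ b) * mcInit q r (a ⊔ b) := by
  cases a <;> cases b <;> simp [mcInit, mul_comm]

/-- Log-supermodularity of the transition matrix. -/
lemma mcT_mul_le {q r : ℝ} (hq1 : q < 1/2) (hr1 : r < 1/2) (a a' b b' : Bool) :
    mcT q r a a' * mcT q r b b' ≤ mcT q r (a ⊓ b) (a' ⊓ b') * mcT q r (a ⊔ b) (a' ⊔ b') := by
  cases a <;> cases a' <;> cases b <;> cases b' <;> simp [mcT] <;> nlinarith

/-- The emission weights for the symbols `w` and `0` satisfy the four functions inequality; the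
smaller state `a ⊓ b` is paired with the symbol `0`. -/
lemma mcE_mul_le {e0 e1 : ℝ} (he01 : e0 < 1/2) (he11 : e1 < 1/2) (w a b : Bool) :
    mcE e0 e1 a w * mcE e0 e1 b false ≤ mcE e0 e1 (a ⊓ b) false * mcE e0 e1 (a ⊔ b) w := by
  cases a <;> cases b <;> cases w <;> simp [mcE] <;> nlinarith

lemma priorX_pos {q r : ℝ} (hq0 : 0 < q) (hq1 : q < 1/2) (hr0 : 0 < r) (hr1 : r < 1/2)
    (n : ℕ) (x : Fin n → Bool) : 0 < priorX q r n x := by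
  unfold priorX
  refine mul_pos ?_ (Finset.prod_pos fun t _ => mcT_pos hq0 hq1 hr0 hr1 _ _)
  split_ifs
  · exact mcInit_pos hq0 hr0 _
  · exact one_pos

lemma priorX_mul_le {q r : ℝ} (hq0 : 0 < q) (hq1 : q < 1/2) (hr0 : 0 < r) (hr1 : r < 1/2)
    (n : ℕ) (x y : Fin n → Bool) :
    priorX q r n x * priorX q r n y ≤ priorX q r n (x ⊓ y) * priorX q r n (x ⊔ y) := by
  unfold priorX
  refine le_of_eq_of_le (mul_mul_mul_comm _ _ _ _) (le_of_le_of_eq ?_ (mul_mul_mul_comm _ _ _ _))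
  rw [← Finset.prod_mul_distrib, ← Finset.prod_mul_distrib]
  have hT := fun a b => (mcT_pos hq0 hq1 hr0 hr1 a b).le
  refine mul_le_mul ?_ ?_ ?_ ?_
  · split_ifs
    · exact mcInit_mul_le q r _ _
    · exact le_rfl
  · exact Finset.prod_le_prod (fun t _ => mul_nonneg (hT _ _) (hT _ _))
      fun t _ => mcT_mul_le hq1 hr1 _ _ _ _
  · exact Finset.prod_nonneg fun t _ => mul_nonneg (hT _ _) (hT _ _)
  · split_ifs
    · exact (mul_pos (mcInit_pos hq0 hr0 _) (mcInit_pos hq0 hr0 _)).le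
    · norm_num

/-- The likelihood ratio is maximized by the all-zero observed sequence. -/
theorem stmt2 (q r e0 e1 : ℝ)
    (hq0 : 0 < q) (hq1 : q < 1/2) (hr0 : 0 < r) (hr1 : r < 1/2)
    (he00 : 0 < e0) (he01 : e0 < 1/2) (he10 : 0 < e1) (he11 : e1 < 1/2)
    (n : ℕ) (hn : 1 ≤ n) (i : Fin n) (z : Fin n → Bool) :
    likGivenXi q r e0 e1 n i false z / likGivenXi q r e0 e1 n i true z
      ≤ likGivenXi q r e0 e1 n i false (fun _ => false) /
        likGivenXi q r e0 e1 n i true (fun _ => false) := by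
  have hE := mcE_pos he00 he01 he10 he11
  have hEn := fun a b => (hE a b).le
  have hP := priorX_pos hq0 hq1 hr0 hr1 n
  have hW : ∀ z x : Fin n → Bool, 0 < priorX q r n x * ∏ t, mcE e0 e1 (x t) (z t) :=
    fun z x => mul_pos (hP x) (Finset.prod_pos fun t _ => hE _ _)
  have hJ : ∀ v z x, 0 ≤ jointAt q r e0 e1 n i v z x := by
    intro v z x
    unfold jointAt
    split_ifs
    · exact (hW z x).le
    · exact le_rfl
  have hApos : ∀ z, 0 < ∑ x, jointAt q r e0 e1 n i true z x := fun z =>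
    Finset.sum_pos' (fun x _ => hJ _ _ x)
      ⟨fun _ => true, Finset.mem_univ _, by simpa [jointAt] using hW z fun _ => true⟩
  have hD : ∀ v, 0 ≤ eventPr q r e0 e1 n (fun x _ => x i = v) := by
    intro v
    refine Finset.sum_nonneg fun x _ => Finset.sum_nonneg fun z _ => ?_
    split_ifs
    · exact (hW z x).le
    · exact le_rfl
  have key : (∑ x, jointAt q r e0 e1 n i false z x) *
        (∑ x, jointAt q r e0 e1 n i true (fun _ => false) x) ≤
      (∑ x, jointAt q r e0 e1 n i false (fun _ => false) x) *
        (∑ x, jointAt q r e0 e1 n i true z x) := by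
    refine four_functions_theorem_univ _ _ _ _ (fun x => hJ _ _ x) (fun x => hJ _ _ x)
      (fun x => hJ _ _ x) (fun x => hJ _ _ x) fun x y => ?_
    by_cases hx : x i = false
    · by_cases hy : y i = true
      · have hinf : (x ⊓ y) i = false := by simp [hx]
        have hsup : (x ⊔ y) i = true := by simp [hy]
        simp only [jointAt, if_pos hx, if_pos hy, if_pos hinf, if_pos hsup]
        rw [mul_mul_mul_comm, mul_mul_mul_comm (priorX q r n (x ⊓ y)),
          ← Finset.prod_mul_distrib, ← Finset.prod_mul_distrib]
        exact mul_le_mul (priorX_mul_le hq0 hq1 hr0 hr1 n x y)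
          (Finset.prod_le_prod (fun t _ => mul_nonneg (hEn _ _) (hEn _ _))
            fun t _ => mcE_mul_le he01 he11 _ _ _)
          (Finset.prod_nonneg fun t _ => mul_nonneg (hEn _ _) (hEn _ _))
          (mul_pos (hP _) (hP _)).le
      · have h0 : jointAt q r e0 e1 n i true (fun _ => false) y = 0 := if_neg hy
        rw [h0, mul_zero]
        exact mul_nonneg (hJ _ _ _) (hJ _ _ _)
    · have h0 : jointAt q r e0 e1 n i false z x = 0 := if_neg hx
      rw [h0, zero_mul]
      exact mul_nonneg (hJ _ _ _) (hJ _ _ _)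
  unfold likGivenXi condPr
  simp only [eventPr_eq_sum_jointAt]
  rw [div_div_div_comm, div_div_div_comm (∑ x, jointAt q r e0 e1 n i false (fun _ => false) x)]
  refine div_le_div_of_nonneg_right ?_ (div_nonneg (hD _) (hD _))
  rwa [div_le_div_iff₀ (hApos _) (hApos _)]

end
end

section
/- Assume additionally b < 0, c < a, and d < a. Set σ = λ2/λ1, γ = ((a−d)(c−b))/((a−c)(d−b)), A = a(c−b), A' = a(d−b), B = −b(a−c), B' = −b(a−d), C = c(c−b), C' = d(d−b), D = c(a−c), D' = d(a−d). Then for every i ∈ {1,…,n}, with 0^n the all-zero sequence and s_i = γ·σ^{n−i} + σ^i: (α_i(0; 0^n)/α_i(1; 0^n))·(β_i(0; 0^n)/β_i(1; 0^n)) = (A·A' − A'·B·s_i + B·B'·σ^n) / (C·C' + C'·D·s_i + D·D'·σ^n); moreover the function s ↦ (A·A' − A'·B·s + B·B'·σ^n)/(C·C' + C'·D·s + D·D'·σ^n) is strictly decreasing on [0, ∞). -/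
/-!
At the all-zero observation both recursions iterate a fixed 2×2 matrix. The forward matrix
`[[(1-q)(1-e0), q(1-e0)], [r e1, (1-r) e1]]` has eigenvectors `(a, c)` and `(b, c)`, the backward
matrix `[[(1-q)(1-e0), q e1], [r (1-e0), (1-r) e1]]` has eigenvectors `(a, d)` and `(b, d)`, both
for the eigenvalues `l1` and `l2`; this rests on the identity
`Δ² = ((1-q)(1-e0) - (1-r) e1)² + 4 q r (1-e0) e1`. Expanding the start vector `(1, 1)` in these
bases (`fwd_zero_closed`, `bwd_zero_closed`) and dividing by the power of `l1` gives
`α_i(0)/α_i(1) = (A - B σ^i)/(C + D σ^i)` and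
`β_i(0)/β_i(1) = (A' - B' σ^(n-i))/(C' + D' σ^(n-i))`.
In the product, `A B' = γ A' B` and `C D' = γ C' D` collect the two middle terms into `s_i`.

For the monotonicity, all eight constants and `σ` are positive (`l1 * l2` is the determinant
`(1-q-r)(1-e0) e1 > 0`), so the denominator is positive on `[0, ∞)`. The
numerator changes sign for large `s`, but after cross-multiplication the difference of two values
is `t - s` times a constant that is a sum of positive terms.
-/

open Finset
open scoped Classical

noncomputable section

/-- The forward recursion at the all-zero observation, diagonalised: `(a, c)` and `(b, c)` are
eigenvectors of the step matrix for `l1` and `l2`. Both sides carry the factor `c (a - b)`, the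
determinant of the change of basis. -/
lemma fwd_zero_closed (q r e0 e1 a b c l1 l2 : ℝ) (n : ℕ)
    (h1 : (1 - e0) * (a * (1 - q) + c * q) = l1 * a)
    (h2 : e1 * (a * r + c * (1 - r)) = l1 * c)
    (h3 : (1 - e0) * (b * (1 - q) + c * q) = l2 * b)
    (h4 : e1 * (b * r + c * (1 - r)) = l2 * c) (t : ℕ) (ht : t ≤ n) :
    c * (a - b) * fwd q r e0 e1 n (fun _ => false) t false
        = a * (c - b) * l1 ^ t + b * (a - c) * l2 ^ t ∧
    c * (a - b) * fwd q r e0 e1 n (fun _ => false) t true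
        = c * (c - b) * l1 ^ t + c * (a - c) * l2 ^ t := by
  induction t with
  | zero => simp only [fwd]; constructor <;> ring
  | succ t ih =>
    obtain ⟨i1, i2⟩ := ih (by omega)
    have htn : t < n := by omega
    simp only [fwd, htn, dite_true, mcE, mcT]
    constructor
    · linear_combination (1 - e0) * (1 - q) * i1 + (1 - e0) * q * i2
        + (c - b) * l1 ^ t * h1 + (a - c) * l2 ^ t * h3
    · linear_combination e1 * r * i1 + e1 * (1 - r) * i2
        + (c - b) * l1 ^ t * h2 + (a - c) * l2 ^ t * h4

/-- The backward recursion at the all-zero observation, diagonalised in the eigenvectors `(a, d)`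
and `(b, d)`; `k` counts the steps back from time `n`. -/
lemma bwd_zero_closed (q r e0 e1 a b d l1 l2 : ℝ) (n : ℕ)
    (h1 : a * (1 - e0) * (1 - q) + d * e1 * q = l1 * a)
    (h2 : a * (1 - e0) * r + d * e1 * (1 - r) = l1 * d)
    (h3 : b * (1 - e0) * (1 - q) + d * e1 * q = l2 * b)
    (h4 : b * (1 - e0) * r + d * e1 * (1 - r) = l2 * d) (k t : ℕ) (ht : t + k = n) :
    d * (a - b) * bwd q r e0 e1 n (fun _ => false) t false
        = a * (d - b) * l1 ^ k + b * (a - d) * l2 ^ k ∧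
    d * (a - b) * bwd q r e0 e1 n (fun _ => false) t true
        = d * (d - b) * l1 ^ k + d * (a - d) * l2 ^ k := by
  induction k generalizing t with
  | zero =>
    have htn : ¬ t < n := by omega
    rw [bwd.eq_1 q r e0 e1 n _ t false, bwd.eq_1 q r e0 e1 n _ t true]
    simp only [htn, dite_false]
    constructor <;> ring
  | succ k ih =>
    obtain ⟨i1, i2⟩ := ih (t + 1) (by omega)
    have htn : t < n := by omega
    rw [bwd.eq_1 q r e0 e1 n _ t false, bwd.eq_1 q r e0 e1 n _ t true]
    simp only [htn, dite_true, mcE, mcT]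
    constructor
    · linear_combination (1 - e0) * (1 - q) * i1 + e1 * q * i2
        + (d - b) * l1 ^ k * h1 + (a - d) * l2 ^ k * h3
    · linear_combination (1 - e0) * r * i1 + e1 * (1 - r) * i2
        + (d - b) * l1 ^ k * h2 + (a - d) * l2 ^ k * h4

/-- Common nonzero factors on the two components drop out of their ratio. -/
lemma ratio_of_scaled {K L u v X Y : ℝ} (hK : K ≠ 0) (hL : L ≠ 0)
    (hu : K * u = X * L) (hv : K * v = Y * L) : u / v = X / Y := by
  rw [← mul_div_mul_left u v hK, hu, hv, mul_div_mul_right X Y hL]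

/-- Closed form of the likelihood ratio at `z = 0^n` in terms of `s_i = γσ^{n-i} + σ^i`,
and strict monotonicity (decrease) of the resulting function of `s` on `[0, ∞)`. -/
theorem stmt12 (q r e0 e1 : ℝ)
    (hq0 : 0 < q) (hq1 : q < 1/2) (hr0 : 0 < r) (hr1 : r < 1/2)
    (he00 : 0 < e0) (he01 : e0 < 1/2) (he10 : 0 < e1) (he11 : e1 < 1/2)
    (n : ℕ) (hn : 1 ≤ n)
    (Δ a b c d l1 l2 : ℝ)
    (hΔ : Δ = Real.sqrt ((1-q)^2*(1-e0)^2 - 2*(1-q-r-q*r)*(1-e0)*e1 + (1-r)^2*e1^2))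
    (ha : a = (1-q)*(1-e0) - (1-r)*e1 + Δ)
    (hb : b = (1-q)*(1-e0) - (1-r)*e1 - Δ)
    (hc : c = 2*r*e1) (hd : d = 2*r*(1-e0))
    (hl1 : l1 = ((1-q)*(1-e0) + (1-r)*e1 + Δ)/2)
    (hl2 : l2 = ((1-q)*(1-e0) + (1-r)*e1 - Δ)/2)
    (hbneg : b < 0) (hca : c < a) (hda : d < a)
    (σ γ A A' B B' C C' D D' : ℝ)
    (hσ : σ = l2 / l1) (hγ : γ = ((a-d)*(c-b)) / ((a-c)*(d-b)))
    (hA : A = a*(c-b)) (hA' : A' = a*(d-b))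
    (hB : B = -b*(a-c)) (hB' : B' = -b*(a-d))
    (hC : C = c*(c-b)) (hC' : C' = d*(d-b))
    (hD : D = c*(a-c)) (hD' : D' = d*(a-d)) :
    (∀ i : ℕ, 1 ≤ i → i ≤ n →
      (fwd q r e0 e1 n (fun _ => false) i false / fwd q r e0 e1 n (fun _ => false) i true) *
      (bwd q r e0 e1 n (fun _ => false) i false / bwd q r e0 e1 n (fun _ => false) i true)
        = (A*A' - A'*B*(γ*σ^(n-i) + σ^i) + B*B'*σ^n) /
          (C*C' + C'*D*(γ*σ^(n-i) + σ^i) + D*D'*σ^n)) ∧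
    StrictAntiOn (fun s : ℝ =>
      (A*A' - A'*B*s + B*B'*σ^n) / (C*C' + C'*D*s + D*D'*σ^n)) (Set.Ici 0) := by
  have hx : 0 < 1 - e0 := by linarith
  have hΔ2 : Δ ^ 2 = ((1-q)*(1-e0) - (1-r)*e1) ^ 2 + 4*q*r*(1-e0)*e1 := by
    have hrad : (1-q)^2*(1-e0)^2 - 2*(1-q-r-q*r)*(1-e0)*e1 + (1-r)^2*e1^2
        = ((1-q)*(1-e0) - (1-r)*e1) ^ 2 + 4*q*r*(1-e0)*e1 := by ring
    rw [hΔ, hrad, Real.sq_sqrt]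
    positivity
  have hΔ0 : 0 ≤ Δ := hΔ ▸ Real.sqrt_nonneg _
  have hcpos : 0 < c := by rw [hc]; positivity
  have hdpos : 0 < d := by rw [hd]; positivity
  have hapos : 0 < a := hcpos.trans hca
  have hl1pos : 0 < l1 := by
    have h1 : 0 < (1-q)*(1-e0) := mul_pos (by linarith) hx
    have h2 : 0 < (1-r)*e1 := mul_pos (by linarith) he10
    rw [hl1]; linarith
  have hdet : l1 * l2 = (1-q-r)*(1-e0)*e1 := by
    rw [hl1, hl2]; linear_combination (-1/4) * hΔ2
  have hl2pos : 0 < l2 := by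
    have : 0 < l1 * l2 := by
      rw [hdet]; exact mul_pos (mul_pos (by linarith) hx) he10
    exact (pos_iff_pos_of_mul_pos this).mp hl1pos
  have hσpos : 0 < σ := hσ ▸ div_pos hl2pos hl1pos
  have hl2σ : l2 = σ * l1 := by rw [hσ]; field_simp
  have hac : 0 < a - c := by linarith
  have had : 0 < a - d := by linarith
  have hcb : 0 < c - b := by linarith
  have hdb : 0 < d - b := by linarith
  have hab : 0 < a - b := by linarith
  have hnb : 0 < -b := by linarith
  have hApos : 0 < A := hA ▸ mul_pos hapos hcb
  have hA'pos : 0 < A' := hA' ▸ mul_pos hapos hdb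
  have hBpos : 0 < B := hB ▸ mul_pos hnb hac
  have hB'pos : 0 < B' := hB' ▸ mul_pos hnb had
  have hCpos : 0 < C := hC ▸ mul_pos hcpos hcb
  have hC'pos : 0 < C' := hC' ▸ mul_pos hdpos hdb
  have hDpos : 0 < D := hD ▸ mul_pos hcpos hac
  have hD'pos : 0 < D' := hD' ▸ mul_pos hdpos had
  constructor
  · intro i _ hin
    have hpow (k : ℕ) : l2 ^ k = σ ^ k * l1 ^ k := by rw [hl2σ, mul_pow]
    obtain ⟨f0, f1⟩ := fwd_zero_closed q r e0 e1 a b c l1 l2 n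
      (by rw [ha, hc, hl1]; linear_combination (-1/2) * hΔ2)
      (by rw [ha, hc, hl1]; ring)
      (by rw [hb, hc, hl2]; linear_combination (-1/2) * hΔ2)
      (by rw [hb, hc, hl2]; ring) i hin
    obtain ⟨g0, g1⟩ := bwd_zero_closed q r e0 e1 a b d l1 l2 n
      (by rw [ha, hd, hl1]; linear_combination (-1/2) * hΔ2)
      (by rw [ha, hd, hl1]; ring)
      (by rw [hb, hd, hl2]; linear_combination (-1/2) * hΔ2)
      (by rw [hb, hd, hl2]; ring) (n - i) i (by omega)
    rw [hpow] at f0 f1 g0 g1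
    have hfwd := ratio_of_scaled (X := A - B * σ ^ i) (Y := C + D * σ ^ i)
      (mul_pos hcpos hab).ne' (pow_pos hl1pos i).ne'
      (f0.trans (by rw [hA, hB]; ring)) (f1.trans (by rw [hC, hD]; ring))
    have hbwd := ratio_of_scaled (X := A' - B' * σ ^ (n - i)) (Y := C' + D' * σ ^ (n - i))
      (mul_pos hdpos hab).ne' (pow_pos hl1pos (n - i)).ne'
      (g0.trans (by rw [hA', hB']; ring)) (g1.trans (by rw [hC', hD']; ring))
    rw [hfwd, hbwd, div_mul_div_comm]
    have hσn : σ ^ n = σ ^ i * σ ^ (n - i) := by rw [← pow_add]; congr 1; omega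
    have hγ' : γ * ((a-c)*(d-b)) = (a-d)*(c-b) := by
      rw [hγ]; exact div_mul_cancel₀ _ (mul_pos hac hdb).ne'
    have hnum : A' * B * γ = A * B' := by
      rw [hA, hA', hB, hB']; linear_combination (-a * b) * hγ'
    have hden : C' * D * γ = C * D' := by
      rw [hC, hC', hD, hD']; linear_combination (c * d) * hγ'
    rw [hσn]
    congr 1
    · linear_combination σ ^ (n - i) * hnum
    · linear_combination -σ ^ (n - i) * hden
  · intro s hs t ht hst
    have hs0 : (0:ℝ) ≤ s := hs
    have ht0 : (0:ℝ) ≤ t := ht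
    have hσn : 0 < σ ^ n := pow_pos hσpos n
    -- The cross-multiplied difference is `(t - s)` times this positive constant.
    have key : 0 < (t - s) *
        (A'*B*(C*C' + D*D'*σ^n) + C'*D*(A*A' + B*B'*σ^n)) :=
      mul_pos (sub_pos.mpr hst) (by positivity)
    change (A*A' - A'*B*t + B*B'*σ^n) / (C*C' + C'*D*t + D*D'*σ^n)
      < (A*A' - A'*B*s + B*B'*σ^n) / (C*C' + C'*D*s + D*D'*σ^n)
    rw [div_lt_div_iff₀ (by positivity) (by positivity)]
    linarith

end
end

section
/- There exists a constant C ≥ 0 depending only on q, r, ρ0, ρ1 (and not on n) such that for every n ≥ 1, every maximizer i* of the function i ↦ Pr[Z = 0^n | X_i = 0] / Pr[Z = 0^n | X_i = 1] over i ∈ {1,…,n} satisfies |i* − n/2| ≤ C, where 0^n denotes the all-zero sequence. -/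
/-!
The chain is reversible with respect to `π`, so the observations before time `i`, given `X_i = v`,
have the law of observations generated forward from `v`. Hence, for `n = m + 1` and a 0-based
index `i`, `Pr[Z = 0^n | X_i = v] = B(v,0) h_i(v) h_{m-i}(v)`, where `h_k(v)` (`zerosLik`) is the
probability of `k` zeros after a visit to `v` (`lik_eq`). The quantity to be maximized is therefore
`(1-ρ0)/ρ1 * ρ_i * ρ_{m-i}` with `ρ_k = h_k(0)/h_k(1)` (`sideRatio`).

The sequence `ρ_k` starts at `1` and follows a Möbius recursion whose fixed point `s > 1` it
approaches from below, the distance shrinking by a factor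
`θ = (1-q-r)/((1-q)(1-r)) < 1` at least in each step (`moebius_contract`). If `θ^N < 1/2` and the
smaller side `j` of a splitting satisfies `j + N ≤ m/2`, then both sides of the balanced splitting
are closer to `s` than half the distance `s - ρ_j`, so its product exceeds `s ρ_j`, which bounds the
product of the unbalanced splitting (`balanced_of_contract`). Thus the maximizer is within `N + 2`
of `n/2`.
-/

open Finset
open scoped Classical

noncomputable section

/-! ### Summing out the hidden path -/

/-- The operator `(L c)(v) = ∑_y P(v,y) w(y) c(y)` on functions of the hidden state. -/
def stepOp (q r : ℝ) (w c : Bool → ℝ) (v : Bool) : ℝ :=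
  ∑ y, mcT q r v y * (w y * c y)

/-- Total weight of the hidden paths of length `m + 1` with `x i = v`, where the initial weight is
`g`, the transitions are `mcT q r` and each visited state `y` contributes a factor `w y`. -/
def pathSum (q r : ℝ) (w g : Bool → ℝ) (m : ℕ) (i : Fin (m + 1)) (v : Bool) : ℝ :=
  ∑ x : Fin (m + 1) → Bool, if x i = v then
    g (x 0) * (∏ t : Fin m, mcT q r (x t.castSucc) (x t.succ)) * ∏ t, w (x t) else 0

lemma sum_fin_cons {m : ℕ} (f : (Fin (m + 1) → Bool) → ℝ) :
    ∑ x, f x = ∑ u : Bool, ∑ y : Fin m → Bool, f (Fin.cons u y) := by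
  rw [← (Fin.consEquiv (fun _ : Fin (m + 1) => Bool)).sum_comp, Fintype.sum_prod_type]
  rfl

lemma pathSum_total (q r : ℝ) (w g : Bool → ℝ) (m : ℕ) :
    ∑ b, pathSum q r w g m 0 b = ∑ x : Fin (m + 1) → Bool,
      g (x 0) * (∏ t : Fin m, mcT q r (x t.castSucc) (x t.succ)) * ∏ t, w (x t) := by
  unfold pathSum
  rw [Finset.sum_comm]
  refine Finset.sum_congr rfl fun x _ => ?_
  simp

lemma path_weight_cons (q r : ℝ) (w g : Bool → ℝ) (m : ℕ) (u : Bool) (y : Fin (m + 1) → Bool) :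
    g ((Fin.cons u y : Fin (m + 2) → Bool) 0) *
      (∏ t : Fin (m + 1), mcT q r ((Fin.cons u y : Fin (m + 2) → Bool) t.castSucc)
        ((Fin.cons u y : Fin (m + 2) → Bool) t.succ)) *
      ∏ t, w ((Fin.cons u y : Fin (m + 2) → Bool) t) =
    g u * w u * (mcT q r u (y 0) * (∏ t : Fin m, mcT q r (y t.castSucc) (y t.succ)) *
      ∏ t, w (y t)) := by
  rw [Fin.prod_univ_succ (n := m), Fin.prod_univ_succ (n := m + 1)]
  simp only [Fin.cons_zero, Fin.cons_succ, Fin.castSucc_zero, ← Fin.succ_castSucc]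
  ring

lemma pathSum_zero (q r : ℝ) (w g : Bool → ℝ) (m : ℕ) (v : Bool) :
    pathSum q r w g m 0 v = g v * (w v * (stepOp q r w)^[m] (fun _ => 1) v) := by
  induction m generalizing g v with
  | zero =>
    unfold pathSum
    rw [sum_fin_cons]
    cases v <;> simp
  | succ m ih =>
    have h : pathSum q r w g (m + 1) 0 v = g v * w v * ∑ b, pathSum q r w (mcT q r v) m 0 b := by
      rw [pathSum_total, Finset.mul_sum]
      unfold pathSum
      rw [sum_fin_cons]
      simp only [path_weight_cons]
      rw [Finset.sum_eq_single v]
      · simp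
      · intro b _ hb
        simp [hb]
      · simp
    rw [h, Function.iterate_succ_apply']
    simp only [ih]
    rw [stepOp, mul_assoc]

lemma pathSum_succ (q r : ℝ) (w g : Bool → ℝ) (m : ℕ) (i : Fin (m + 1)) (v : Bool) :
    pathSum q r w g (m + 1) i.succ v =
      pathSum q r w (fun y => ∑ u, g u * w u * mcT q r u y) m i v := by
  unfold pathSum
  rw [sum_fin_cons, Finset.sum_comm]
  refine Finset.sum_congr rfl fun y _ => ?_
  simp only [path_weight_cons]
  simp only [Fin.cons_succ]
  by_cases h : y i = v
  · simp only [h, if_true, Finset.sum_mul]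
    refine Finset.sum_congr rfl fun u _ => by ring
  · simp [h]

/-- Detailed balance: a forward step applied to `π · c` is `π · L c`. -/
lemma reversible_step (q r : ℝ) (w c : Bool → ℝ) (y : Bool) :
    ∑ u, mcInit q r u * c u * w u * mcT q r u y = mcInit q r y * stepOp q r w c y := by
  cases y <;> simp [stepOp, mcInit, mcT] <;> ring

lemma pathSum_eq (q r : ℝ) (w c : Bool → ℝ) (m : ℕ) (i : Fin (m + 1)) (v : Bool) :
    pathSum q r w (fun u => mcInit q r u * c u) m i v =
      mcInit q r v * (stepOp q r w)^[i] c v *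
        (w v * (stepOp q r w)^[m - i] (fun _ => 1) v) := by
  induction m generalizing c with
  | zero =>
    obtain rfl : i = 0 := Fin.fin_one_eq_zero i
    rw [pathSum_zero]
    simp
  | succ m ih =>
    induction i using Fin.cases with
    | zero =>
      rw [pathSum_zero]
      simp
    | succ i =>
      rw [pathSum_succ]
      simp only [reversible_step]
      rw [ih]
      simp

/-! ### The conditional likelihoods -/

/-- The conditional probability, given that the hidden state is `v`, that the next `k` observations
(the current one excluded) are all `0`. -/
def zerosLik (q r e0 e1 : ℝ) (k : ℕ) (v : Bool) : ℝ :=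
  (stepOp q r (fun y => mcE e0 e1 y false))^[k] (fun _ => 1) v

lemma priorX_succ (q r : ℝ) (m : ℕ) (x : Fin (m + 1) → Bool) :
    priorX q r (m + 1) x =
      mcInit q r (x 0) * ∏ t : Fin m, mcT q r (x t.castSucc) (x t.succ) := by
  simp only [priorX, Nat.succ_pos, dif_pos]
  rfl

lemma eventPr_joint_s13 (q r e0 e1 : ℝ) (m : ℕ) (i : Fin (m + 1)) (v : Bool) :
    eventPr q r e0 e1 (m + 1) (fun x z => z = (fun _ => false) ∧ x i = v) =
      mcInit q r v * zerosLik q r e0 e1 i v *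
        (mcE e0 e1 v false * zerosLik q r e0 e1 (m - i) v) := by
  have h := pathSum_eq q r (fun y => mcE e0 e1 y false) (fun _ => 1) m i v
  unfold zerosLik
  rw [← h]
  unfold eventPr pathSum
  refine Finset.sum_congr rfl fun x _ => ?_
  rw [Finset.sum_eq_single (fun _ => false)]
  · simp [priorX_succ]
  · intro z _ hz
    simp [hz]
  · simp

lemma stepOp_one (q r : ℝ) (k : ℕ) :
    (stepOp q r (fun _ => 1))^[k] (fun _ => 1) = fun _ => 1 := by
  induction k with
  | zero => rfl
  | succ k ih =>
    rw [Function.iterate_succ_apply', ih]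
    funext v
    cases v <;> simp [stepOp, mcT]

lemma eventPr_marginal (q r e0 e1 : ℝ) (m : ℕ) (i : Fin (m + 1)) (v : Bool) :
    eventPr q r e0 e1 (m + 1) (fun x _ => x i = v) = mcInit q r v := by
  have h := pathSum_eq q r (fun _ => 1) (fun _ => 1) m i v
  simp only [stepOp_one, mul_one] at h
  rw [← h]
  unfold eventPr pathSum
  refine Finset.sum_congr rfl fun x _ => ?_
  by_cases hx : x i = v
  · have hs : ∑ z : Fin (m + 1) → Bool, ∏ t, mcE e0 e1 (x t) (z t) = 1 := by
      rw [← Fintype.prod_sum]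
      refine Finset.prod_eq_one fun t _ => ?_
      cases x t <;> simp [mcE]
    simp [hx, ← Finset.mul_sum, hs, priorX_succ]
  · simp [hx]

lemma lik_eq (q r e0 e1 : ℝ) (hq0 : 0 < q) (hr0 : 0 < r) (m : ℕ) (i : Fin (m + 1)) (v : Bool) :
    likGivenXi q r e0 e1 (m + 1) i v (fun _ => false) =
      mcE e0 e1 v false * zerosLik q r e0 e1 i v * zerosLik q r e0 e1 (m - i) v := by
  have hpi : mcInit q r v ≠ 0 := by
    cases v <;> simp only [mcInit] <;> positivity
  unfold likGivenXi condPr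
  rw [eventPr_joint_s13, eventPr_marginal]
  field_simp

/-! ### The one-sided likelihood ratio -/

/-- The likelihood ratio `Pr[0^k | X = 0] / Pr[0^k | X = 1]` of the `k` observations on one side. -/
def sideRatio (q r e0 e1 : ℝ) (k : ℕ) : ℝ :=
  zerosLik q r e0 e1 k false / zerosLik q r e0 e1 k true

lemma zerosLik_succ (q r e0 e1 : ℝ) (k : ℕ) (v : Bool) :
    zerosLik q r e0 e1 (k + 1) v =
      mcT q r v true * (e1 * zerosLik q r e0 e1 k true) +
        mcT q r v false * ((1 - e0) * zerosLik q r e0 e1 k false) := by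
  unfold zerosLik
  rw [Function.iterate_succ_apply']
  simp [stepOp, mcE]

lemma zerosLik_pos (q r e0 e1 : ℝ) (hq0 : 0 < q) (hq1 : q < 1/2) (hr0 : 0 < r) (hr1 : r < 1/2)
    (he01 : e0 < 1/2) (he10 : 0 < e1) (k : ℕ) (v : Bool) : 0 < zerosLik q r e0 e1 k v := by
  induction k generalizing v with
  | zero => simp [zerosLik]
  | succ k ih =>
    have h0 := ih false
    have h1 := ih true
    have ha : 0 < 1 - e0 := by linarith
    have hT : ∀ u, 0 < mcT q r v u := by
      intro u
      cases v <;> cases u <;> simp only [mcT] <;> linarith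
    have := hT true
    have := hT false
    rw [zerosLik_succ]
    positivity

lemma sideRatio_succ (q r e0 e1 : ℝ) (hq0 : 0 < q) (hq1 : q < 1/2) (hr0 : 0 < r) (hr1 : r < 1/2)
    (he01 : e0 < 1/2) (he10 : 0 < e1) (k : ℕ) :
    sideRatio q r e0 e1 (k + 1) =
      ((1 - q) * (1 - e0) * sideRatio q r e0 e1 k + q * e1) /
        (r * (1 - e0) * sideRatio q r e0 e1 k + (1 - r) * e1) := by
  have h1 := zerosLik_pos q r e0 e1 hq0 hq1 hr0 hr1 he01 he10 k true
  unfold sideRatio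
  rw [zerosLik_succ, zerosLik_succ]
  simp only [mcT]
  rw [← div_div_div_cancel_right₀ h1.ne']
  congr 1 <;> field_simp <;> ring

/-- The fixed point of the Möbius recursion lies above `1` because `Z = 0` favours `X = 0`. -/
lemma exists_fixed_point (q r a b : ℝ) (hq0 : 0 < q) (hr0 : 0 < r) (hr1 : r < 1/2)
    (hq1 : q < 1/2) (hb : 0 < b) (hab : b < a) :
    ∃ s : ℝ, 1 < s ∧ s * (r * a * s + (1 - r) * b) = (1 - q) * a * s + q * b := by
  let f : ℝ → ℝ := fun s => s * (r * a * s + (1 - r) * b) - ((1 - q) * a * s + q * b)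
  have hf : ContinuousOn f (Set.Icc 1 (1 / r)) := by
    apply Continuous.continuousOn
    fun_prop
  have h1r : (1 : ℝ) ≤ 1 / r := by
    rw [le_div_iff₀ hr0]
    linarith
  have hf1 : f 1 < 0 := by
    simp only [f]
    nlinarith [mul_pos (show 0 < 1 - q - r by linarith) (sub_pos.2 hab)]
  have hfr : 0 < f (1 / r) := by
    have : f (1 / r) = q * (a / r - b) + (1 - r) * b / r := by
      simp only [f]
      field_simp
      ring
    rw [this]
    have h2 : b < a / r := by
      rw [lt_div_iff₀ hr0]
      nlinarith
    have h3 : 0 < 1 - r := by linarith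
    have h4 : 0 < a / r - b := by linarith
    positivity
  obtain ⟨s, hs, hs0⟩ := intermediate_value_Icc h1r hf ⟨hf1.le, hfr.le⟩
  refine ⟨s, lt_of_le_of_ne hs.1 ?_, sub_eq_zero.1 hs0⟩
  rintro rfl
  exact hf1.ne hs0

/-- The Möbius recursion contracts the distance to its fixed point `s`, from below: the ratio of
consecutive distances is `(1-q-r) a b / ((r a s + (1-r) b) (r a x + (1-r) b))`, and the two factors
of the denominator are at least `(1-q) a` and `(1-r) b`. -/
lemma moebius_contract (q r a b s x : ℝ) (hq0 : 0 < q) (hr0 : 0 < r) (hr1 : r < 1/2)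
    (hq1 : q < 1/2) (hb : 0 < b) (hab : b < a) (hs : 1 < s)
    (hfix : s * (r * a * s + (1 - r) * b) = (1 - q) * a * s + q * b) (hx0 : 0 < x) (hx : x < s) :
    0 < s - ((1 - q) * a * x + q * b) / (r * a * x + (1 - r) * b) ∧
    s - ((1 - q) * a * x + q * b) / (r * a * x + (1 - r) * b) ≤
      (1 - q - r) / ((1 - q) * (1 - r)) * (s - x) := by
  have ha : 0 < a := hb.trans hab
  have hq' : 0 < 1 - q := by linarith
  have hr' : 0 < 1 - r := by linarith
  have hqr : 0 < 1 - q - r := by linarith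
  have hsx : 0 < s - x := by linarith
  have hs0 : 0 < s := by linarith
  have hDs : (1 - q) * a ≤ r * a * s + (1 - r) * b := by
    have : s * ((1 - q) * a) ≤ s * (r * a * s + (1 - r) * b) := by
      rw [hfix]
      nlinarith [mul_pos hq0 hb]
    exact le_of_mul_le_mul_left this hs0
  have hDx : (1 - r) * b ≤ r * a * x + (1 - r) * b := by
    have : 0 < r * a * x := by positivity
    linarith
  have hDs0 : 0 < r * a * s + (1 - r) * b := by positivity
  have hDx0 : 0 < r * a * x + (1 - r) * b := by positivity
  have key : s - ((1 - q) * a * x + q * b) / (r * a * x + (1 - r) * b) =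
      (1 - q - r) * a * b * (s - x) /
        ((r * a * s + (1 - r) * b) * (r * a * x + (1 - r) * b)) := by
    have hs' : s = ((1 - q) * a * s + q * b) / (r * a * s + (1 - r) * b) := by
      rw [eq_div_iff hDs0.ne', hfix]
    have : s - ((1 - q) * a * x + q * b) / (r * a * x + (1 - r) * b) =
      ((1 - q) * a * s + q * b) / (r * a * s + (1 - r) * b) -
        ((1 - q) * a * x + q * b) / (r * a * x + (1 - r) * b) := by rw [← hs']
    rw [this, div_sub_div _ _ hDs0.ne' hDx0.ne']
    congr 1
    ring
  rw [key]
  refine ⟨by positivity, ?_⟩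
  calc (1 - q - r) * a * b * (s - x) /
        ((r * a * s + (1 - r) * b) * (r * a * x + (1 - r) * b))
      ≤ (1 - q - r) * a * b * (s - x) / (((1 - q) * a) * ((1 - r) * b)) := by gcongr
    _ = (1 - q - r) / ((1 - q) * (1 - r)) * (s - x) := by field_simp

/-! ### Locating the maximizer -/

/-- Let `ρ` be a positive sequence approaching `s` from below geometrically. If a product
`ρ j * ρ l` is at least the one of the balanced splitting of `m`, then `j` cannot fall short of
`m / 2` by `N` or more. Used with `j + l = m`, in both orders. -/
lemma balanced_of_contract (ρ : ℕ → ℝ) (s θ : ℝ) (hs : 0 < s) (hθ0 : 0 ≤ θ) (N : ℕ)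
    (hN : θ ^ N < 1 / 2) (hθ1 : θ < 1) (hlt : ∀ k, ρ k < s) (hpos : ∀ k, 0 < ρ k)
    (hc : ∀ k, s - ρ (k + 1) ≤ θ * (s - ρ k)) (m j l : ℕ)
    (hle : ρ (m / 2) * ρ (m - m / 2) ≤ ρ j * ρ l) : m / 2 < j + N := by
  by_contra! hcon
  have hgeo : ∀ d k, s - ρ (k + d) ≤ θ ^ d * (s - ρ k) := by
    intro d k
    induction d with
    | zero => simp
    | succ d ih =>
      calc s - ρ (k + (d + 1)) ≤ θ * (s - ρ (k + d)) := hc (k + d)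
        _ ≤ θ * (θ ^ d * (s - ρ k)) := by gcongr
        _ = θ ^ (d + 1) * (s - ρ k) := by ring
  have hfar : ∀ t, j + N ≤ t → s - ρ t < (s - ρ j) / 2 := by
    intro t ht
    have h1 := hgeo (t - j) j
    rw [show j + (t - j) = t by omega] at h1
    have h2 : θ ^ (t - j) ≤ θ ^ N := pow_le_pow_of_le_one hθ0 hθ1.le (by omega)
    nlinarith [sub_pos.2 (hlt j)]
  have h1 := hfar (m / 2) hcon
  have h2 := hfar (m - m / 2) (by omega)
  have h3 : ρ j * ρ l ≤ ρ j * s := by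
    have := hlt l
    have := hpos j
    gcongr
  -- `x y ≥ s² - s (s - x) - s (s - y)`, so the balanced splitting exceeds `s ρ_j`.
  nlinarith [mul_pos (sub_pos.2 (hlt (m / 2))) (sub_pos.2 (hlt (m - m / 2)))]

/-- Every maximizer of `i ↦ Pr[Z = 0^n | X_i = 0]/Pr[Z = 0^n | X_i = 1]` is within a
constant (independent of `n`) of `n/2`.  Indices are 1-based: `i : Fin n` corresponds
to the time `i.1 + 1`. -/
theorem stmt13 (q r e0 e1 : ℝ)
    (hq0 : 0 < q) (hq1 : q < 1/2) (hr0 : 0 < r) (hr1 : r < 1/2)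
    (he00 : 0 < e0) (he01 : e0 < 1/2) (he10 : 0 < e1) (he11 : e1 < 1/2) :
    ∃ C : ℝ, 0 ≤ C ∧ ∀ n : ℕ, 1 ≤ n → ∀ istar : Fin n,
      (∀ i : Fin n,
        likGivenXi q r e0 e1 n i false (fun _ => false) /
          likGivenXi q r e0 e1 n i true (fun _ => false) ≤
        likGivenXi q r e0 e1 n istar false (fun _ => false) /
          likGivenXi q r e0 e1 n istar true (fun _ => false)) →
      |((istar.1 : ℝ) + 1) - (n : ℝ)/2| ≤ C := by
  set θ : ℝ := (1 - q - r) / ((1 - q) * (1 - r)) with hθ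
  have hq' : 0 < 1 - q := by linarith
  have hr' : 0 < 1 - r := by linarith
  have hqr : 0 < 1 - q - r := by linarith
  have hθ0 : 0 ≤ θ := by positivity
  have hθ1 : θ < 1 := by
    rw [hθ, div_lt_one (by positivity)]
    nlinarith [mul_pos hq0 hr0]
  obtain ⟨N, hN⟩ := exists_pow_lt_of_lt_one (show (0 : ℝ) < 1 / 2 by norm_num) hθ1
  have hab : e1 < 1 - e0 := by linarith
  obtain ⟨s, hs1, hfix⟩ := exists_fixed_point q r (1 - e0) e1 hq0 hr0 hr1 hq1 he10 hab
  set ρ : ℕ → ℝ := sideRatio q r e0 e1 with hρ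
  have hpos : ∀ k, 0 < ρ k := fun k =>
    div_pos (zerosLik_pos q r e0 e1 hq0 hq1 hr0 hr1 he01 he10 k false)
      (zerosLik_pos q r e0 e1 hq0 hq1 hr0 hr1 he01 he10 k true)
  have hstep : ∀ k, ρ k < s → 0 < s - ρ (k + 1) ∧ s - ρ (k + 1) ≤ θ * (s - ρ k) := by
    intro k hk
    rw [hρ, sideRatio_succ q r e0 e1 hq0 hq1 hr0 hr1 he01 he10 k]
    exact moebius_contract q r (1 - e0) e1 s _ hq0 hr0 hr1 hq1 he10 hab hs1 hfix (hpos k) hk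
  have hlt : ∀ k, ρ k < s := by
    intro k
    induction k with
    | zero => simpa [hρ, sideRatio, zerosLik] using hs1
    | succ k ih => exact sub_pos.1 (hstep k ih).1
  have hc : ∀ k, s - ρ (k + 1) ≤ θ * (s - ρ k) := fun k => (hstep k (hlt k)).2
  refine ⟨N + 2, by positivity, ?_⟩
  intro n hn istar hmax
  obtain ⟨m, rfl⟩ : ∃ m, n = m + 1 := ⟨n - 1, by omega⟩
  have hratio : ∀ i : Fin (m + 1),
      likGivenXi q r e0 e1 (m + 1) i false (fun _ => false) /
        likGivenXi q r e0 e1 (m + 1) i true (fun _ => false) =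
      (1 - e0) / e1 * (ρ i * ρ (m - i)) := by
    intro i
    rw [lik_eq q r e0 e1 hq0 hr0, lik_eq q r e0 e1 hq0 hr0, hρ]
    simp only [sideRatio, mcE, div_mul_div_comm, mul_assoc]
  have hle : ρ (m / 2) * ρ (m - m / 2) ≤ ρ istar * ρ (m - istar) := by
    have h := hmax ⟨m / 2, by omega⟩
    rw [hratio, hratio] at h
    exact le_of_mul_le_mul_left h (div_pos (by linarith) he10)
  have h1 := balanced_of_contract ρ s θ (by linarith) hθ0 N hN hθ1 hlt hpos hc m _ _ hle
  have h2 := balanced_of_contract ρ s θ (by linarith) hθ0 N hN hθ1 hlt hpos hc m _ _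
    (hle.trans_eq (mul_comm _ _))
  have hi := istar.isLt
  have h3 : m ≤ 2 * istar.1 + 2 * N := by omega
  have h4 : 2 * istar.1 ≤ m + 2 * N + 1 := by omega
  have h3' : (m : ℝ) ≤ 2 * istar.1 + 2 * N := by exact_mod_cast h3
  have h4' : 2 * (istar.1 : ℝ) ≤ m + 2 * N + 1 := by exact_mod_cast h4
  push_cast
  rw [abs_le]
  constructor <;> linarith

end
end
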